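/- Let T be a finite rooted planar tree. Then the set of restricted morphisms from T into the chain {1 < 2} (order-preserving maps μ from the vertices of T to {1,2} with μ(v) = 2 for every leaf v) is in bijection with the set of grafted trees with skeleton T, i.e. with the set of subtrees A of T containing the root of T such that every vertex of A has either all or none of its T-sons in A. -/

import Mathlib

/-- A finite rooted planar tree: a single constructor taking the ordered list
of principal subtrees of the root. -/
inductive PTree : Type where
  | node : List PTree → PTree

namespace PTree

/-- The trivial tree, reduced to its root. -/
def triv : PTree := node []

/-- Whether a tree is trivial. -/
def isTriv : PTree → Bool
  | .node [] => true
  | _ => false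

mutual
/-- `d(T)`: the number of leaves of a tree. -/
def leaves : PTree → ℕ
  | .node [] => 1
  | .node (t :: ts) => leavesL (t :: ts)
def leavesL : List PTree → ℕ
  | [] => 0
  | t :: ts => leaves t + leavesL ts
end

mutual
/-- `d°(T)`: the number of internal vertices of a tree. -/
def ints : PTree → ℕ
  | .node [] => 0
  | .node (t :: ts) => 1 + intsL (t :: ts)
def intsL : List PTree → ℕ
  | [] => 0
  | t :: ts => ints t + intsL ts
end

mutual
/-- The number of vertices of a tree. -/
def verts : PTree → ℕ
  | .node ts => 1 + vertsL ts
def vertsL : List PTree → ℕ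
  | [] => 0
  | t :: ts => verts t + vertsL ts
end

/-- A tree is `k`-regular if every internal vertex has exactly `k` sons. -/
inductive Regular (k : ℕ) : PTree → Prop where
  | leaf : Regular k (.node [])
  | node (ts : List PTree) (hlen : ts.length = k) (h : ∀ t ∈ ts, Regular k t) :
      Regular k (.node ts)

end PTree
namespace PTree

/-- `IsVertex T p` means that the address `p` (a path: at each step, the index
of the son to follow) is a vertex of the tree `T`. -/
def IsVertex : PTree → List ℕ → Prop
  | _, [] => True
  | .node ts, i :: p => ∃ h : i < ts.length, IsVertex ts[i] p

/-- The vertex set of a finite rooted planar tree, partially ordered by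
`v ≤ w` iff `v` lies on the path from the root to `w`, i.e. iff the address of
`v` is a prefix of that of `w`. -/
def Vx (T : PTree) : Type := {p : List ℕ // IsVertex T p}

theorem isVertex_nil (T : PTree) : IsVertex T [] := by cases T; simp [IsVertex]

/-- The root of a tree, as a vertex. -/
def rootVx (T : PTree) : Vx T := ⟨[], isVertex_nil T⟩

/-- A morphism from the poset of vertices of `T` into a poset `P`:
an order-preserving map (the vertex order being the prefix order on addresses). -/
def IsMorph {T : PTree} {P : Type} [Preorder P] (μ : Vx T → P) : Prop :=
  ∀ v w : Vx T, v.val <+: w.val → μ v ≤ μ w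

/-- A vertex is a leaf if it has no sons (not even a `0`-th one). -/
def IsLeafVx {T : PTree} (v : Vx T) : Prop := ¬ IsVertex T (v.val ++ [0])

/-- `w` is a son of `v`. -/
def IsSon {T : PTree} (v w : Vx T) : Prop := ∃ i : ℕ, w.val = v.val ++ [i]

/-- The number of restricted morphisms from the vertex poset of `T` into the
chain `{1 < 2 < … < m}` (realized as `Fin m`): order-preserving maps sending
every leaf of `T` to the top element `m` (i.e. `m - 1` in `Fin m`). -/
noncomputable def restrCount (m : ℕ) (T : PTree) : ℕ :=
  Nat.card {μ : Vx T → Fin m //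
    IsMorph μ ∧ ∀ v : Vx T, IsLeafVx v → (μ v : ℕ) = m - 1}

/-- The number of all morphisms from the vertex poset of `T` into the chain
`{1 < 2 < … < m}` (realized as `Fin m`). -/
noncomputable def morphCount (m : ℕ) (T : PTree) : ℕ :=
  Nat.card {μ : Vx T → Fin m // IsMorph μ}

/-- `σ(T)`: the number of surjective morphisms from the vertex poset of `T`
(with `n` vertices) onto the chain `{1 < 2 < … < n}`. -/
noncomputable def surjCount (T : PTree) : ℕ :=
  Nat.card {μ : Vx T → Fin T.verts // IsMorph μ ∧ Function.Surjective μ}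

end PTree

namespace PTree

theorem isVertex_of_append : ∀ (p q : List ℕ) (T : PTree), IsVertex T (p ++ q) → IsVertex T p
  | [], _, T, _ => isVertex_nil T
  | i :: p, q, .node ts, h => by
    simp only [List.cons_append, IsVertex] at h ⊢
    obtain ⟨hi, h⟩ := h
    exact ⟨hi, isVertex_of_append p q _ h⟩

theorem isVertex_of_isPre {T : PTree} {p q : List ℕ} (h : p <+: q) (hq : IsVertex T q) :
    IsVertex T p := by
  obtain ⟨r, rfl⟩ := h
  exact isVertex_of_append p r T hq

theorem isVertex_zero : ∀ (p : List ℕ) (i : ℕ) (T : PTree),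
    IsVertex T (p ++ [i]) → IsVertex T (p ++ [0])
  | [], i, .node ts, h => by
    simp only [List.nil_append, IsVertex] at h ⊢
    obtain ⟨hi, _⟩ := h
    exact ⟨by omega, trivial⟩
  | j :: p, i, .node ts, h => by
    simp only [List.cons_append, IsVertex] at h ⊢
    obtain ⟨hi, h⟩ := h
    exact ⟨hi, isVertex_zero p i _ h⟩

/-- The vertices all of whose strict ancestors are mapped to the bottom. -/
def toSub {T : PTree} (μ : Vx T → Fin 2) : Set (Vx T) :=
  {v | ∀ (u : Vx T) (i : ℕ), u.val ++ [i] <+: v.val → μ u = 0}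

open Classical in
/-- The map sending to the bottom the vertices with a son in `S`. -/
noncomputable def toMor {T : PTree} (S : Set (Vx T)) : Vx T → Fin 2 :=
  fun v => if ∃ w ∈ S, IsSon v w then 0 else 1

theorem toMor_eq_zero {T : PTree} (S : Set (Vx T)) (v : Vx T) :
    toMor S v = 0 ↔ ∃ w ∈ S, IsSon v w := by
  unfold toMor
  split_ifs with h <;> simp [h]

theorem fin2_eq {a b : Fin 2} (h : a = 0 ↔ b = 0) : a = b := by omega

theorem prefix_son {T : PTree} {v w u : Vx T} (h : IsSon v w) {i : ℕ}
    (hu : u.val ++ [i] <+: w.val) : u.val <+: v.val := by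
  obtain ⟨j, hj⟩ := h
  rw [hj, List.prefix_concat_iff] at hu
  rcases hu with hu | hu
  · rw [(List.append_inj' hu rfl).1]
  · exact (List.prefix_append _ _).trans hu

end PTree

/-- For a finite rooted planar tree `T`, the restricted morphisms from `T` into
the chain `{1 < 2}` (order-preserving maps sending every leaf to `2`) are in
bijection with the grafted trees with skeleton `T`, i.e. with the subtrees `A`
of `T` containing the root (prefix-closed sets of vertices containing the root)
such that every vertex of `A` has either all or none of its `T`-sons in `A`. -/
theorem statement10 (T : PTree) :
    Nonempty
      ({μ : PTree.Vx T → Fin 2 //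
          PTree.IsMorph μ ∧ ∀ v : PTree.Vx T, PTree.IsLeafVx v → (μ v : ℕ) = 1} ≃
       {S : Set (PTree.Vx T) //
          PTree.rootVx T ∈ S ∧
          (∀ v w : PTree.Vx T, v.val <+: w.val → w ∈ S → v ∈ S) ∧
          (∀ v ∈ S, (∀ w : PTree.Vx T, PTree.IsSon v w → w ∈ S) ∨
                    (∀ w : PTree.Vx T, PTree.IsSon v w → w ∉ S))}) := by
  classical
  refine ⟨⟨fun μ => ⟨PTree.toSub μ.1, ?_, ?_, ?_⟩, fun S => ⟨PTree.toMor S.1, ?_, ?_⟩, ?_, ?_⟩⟩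
  · intro u i h
    simp [PTree.rootVx] at h
  · intro v w hvw hw u i h
    exact hw u i (h.trans hvw)
  · intro v hv
    by_cases h0 : μ.1 v = 0
    · left
      intro w hw u i hu
      have := μ.2.1 u v (PTree.prefix_son hw hu)
      rw [h0] at this
      exact Fin.le_zero_iff.mp this
    · right
      rintro w ⟨j, hj⟩ hw
      exact h0 (hw v j (by rw [hj]))
  · intro v w hvw
    by_cases h : PTree.toMor S.1 w = 0
    · have : PTree.toMor S.1 v = 0 := by
        rw [PTree.toMor_eq_zero] at h ⊢
        obtain ⟨x, hx, j, hj⟩ := h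
        obtain ⟨r, hr⟩ := hvw
        rcases r with _ | ⟨k, r⟩
        · exact ⟨x, hx, j, by rw [hj, ← hr]; simp⟩
        · have hp : v.val ++ [k] <+: x.val := ⟨r ++ [j], by rw [hj, ← hr]; simp⟩
          exact ⟨⟨v.val ++ [k], PTree.isVertex_of_isPre hp x.2⟩,
            S.2.2.1 _ x hp hx, k, rfl⟩
      rw [this]
      exact Fin.zero_le _
    · have : PTree.toMor S.1 w = 1 := by omega
      rw [this]
      omega
  · intro v hv
    have : PTree.toMor S.1 v ≠ 0 := by
      rw [Ne, PTree.toMor_eq_zero]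
      rintro ⟨w, _, j, hj⟩
      exact hv (PTree.isVertex_zero v.val j T (hj ▸ w.2))
    omega
  · intro μ
    apply Subtype.ext
    funext v
    apply PTree.fin2_eq
    change PTree.toMor (PTree.toSub μ.1) v = 0 ↔ _
    rw [PTree.toMor_eq_zero]
    constructor
    · rintro ⟨w, hw, j, hj⟩
      exact hw v j (by rw [hj])
    · intro h0
      have hl : PTree.IsVertex T (v.val ++ [0]) := by
        by_contra hl
        have := μ.2.2 v hl
        rw [h0] at this
        simp at this
      refine ⟨⟨v.val ++ [0], hl⟩, ?_, 0, rfl⟩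
      intro u i hu
      have := μ.2.1 u v (PTree.prefix_son (w := ⟨v.val ++ [0], hl⟩) ⟨0, rfl⟩ hu)
      rw [h0] at this
      exact Fin.le_zero_iff.mp this
  · intro S
    apply Subtype.ext
    ext v
    change (∀ (u : PTree.Vx T) (i : ℕ), u.val ++ [i] <+: v.val → PTree.toMor S.1 u = 0) ↔ v ∈ S.1
    simp only [PTree.toMor_eq_zero]
    constructor
    · intro h
      rcases List.eq_nil_or_concat v.val with hv | ⟨p, i, hv⟩
      · have : v = PTree.rootVx T := Subtype.ext hv
        rw [this]
        exact S.2.1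
      · rw [List.concat_eq_append] at hv
        have hp : p <+: v.val := ⟨[i], hv.symm⟩
        obtain ⟨w, hw, j, hj⟩ := h ⟨p, PTree.isVertex_of_isPre hp v.2⟩ i ⟨[], by simpa using hv.symm⟩
        have hpS := S.2.2.1 ⟨p, PTree.isVertex_of_isPre hp v.2⟩ w ⟨[j], hj.symm⟩ hw
        rcases S.2.2.2 _ hpS with h1 | h1
        · exact h1 v ⟨i, hv⟩
        · exact absurd hw (h1 w ⟨j, hj⟩)
    · intro hv u i hu
      exact ⟨⟨u.val ++ [i], PTree.isVertex_of_isPre hu v.2⟩, S.2.2.1 _ v hu hv, i, rfl⟩
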